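/- Let T > 0, ν > 0, C₀ > 0, let k ≥ 1 be a natural number, and define η̄(t) = (2ν / (C₀ (exp(2νT) − 1))) · exp(νt) for t ∈ [0,T], α(T) = exp(νT) / (ν (exp(2νT) − 1)), and β(T) = 4ν² exp(2νT) / (C₀² (exp(2νT) − 1)²). Then ∫₀^T η̄(t)^{2k} exp(−νt) · ( 1 − C₀ ∫₀^t η̄(s) exp(νs) ds ) dt ≤ β(T)^k · α(T). -/

import Mathlib

open Real

/-!
Put `E = exp (2νT)`. The drift is chosen so that `1 - C₀ ∫₀ᵗ η̄(s) exp (νs) ds` equals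
`(E - exp (2νt)) / (E - 1)`, which is at most `E / (E - 1)`. For `p ≥ 2` the function
`|η̄(t)| ^ p exp (-2νt)` is nondecreasing, so `|η̄(t)| ^ p exp (-νt) ≤ |η̄(T)| ^ p E⁻¹ exp (νt)`.
The factors `E` cancel in the product, `∫₀ᵀ exp (νt) dt ≤ exp (νT) / ν` gives the rate `α(T)`,
and `β(T) = η̄(T) ^ 2` identifies the remaining factor when `p = 2k`.
-/

/-- The normalized shift-drift strength `η̄(t)` on the horizon `[0, T]`: the multiple of
`exp (ν * t)` for which `C₀ * ∫₀ᵀ η̄(s) * exp (ν * s) ds = 1`. It is defined for every real `t`,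
and is identically `0` if `C₀ = 0` or `ν * T = 0`. -/
noncomputable def normalizedShiftDrift (ν C₀ T t : ℝ) : ℝ :=
  2 * ν / (C₀ * (exp (2 * ν * T) - 1)) * exp (ν * t)

theorem integral_exp_const_mul {a : ℝ} (ha : a ≠ 0) (t : ℝ) :
    ∫ s in (0 : ℝ)..t, exp (a * s) = (exp (a * t) - 1) / a := by
  rw [intervalIntegral.integral_comp_mul_left _ ha, integral_exp, mul_zero, exp_zero, smul_eq_mul,
    inv_mul_eq_div]

theorem integral_exp_const_mul_le {a : ℝ} (ha : 0 < a) (t : ℝ) :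
    ∫ s in (0 : ℝ)..t, exp (a * s) ≤ exp (a * t) / a := by
  rw [integral_exp_const_mul ha.ne']
  gcongr
  exact sub_le_self _ zero_le_one

theorem abs_mul_exp_rpow (c x p : ℝ) : |c * exp x| ^ p = |c| ^ p * exp (x * p) := by
  rw [abs_mul, abs_exp, mul_rpow (abs_nonneg c) (exp_nonneg x), exp_mul]

theorem abs_mul_exp_rpow_mul_exp_neg_le {ν p t T : ℝ} (hν : 0 ≤ ν) (hp : 2 ≤ p) (htT : t ≤ T)
    (c : ℝ) :
    |c * exp (ν * t)| ^ p * exp (-ν * t) ≤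
      |c * exp (ν * T)| ^ p * exp (-(2 * ν * T)) * exp (ν * t) := by
  have exponent_le : ν * t * p + -ν * t ≤ ν * T * p + -(2 * ν * T) + ν * t := by
    linarith [mul_le_mul_of_nonneg_left htT (mul_nonneg (sub_nonneg.2 hp) hν)]
  simp only [abs_mul_exp_rpow, mul_assoc (|c| ^ p), ← exp_add]
  gcongr

section NormalizedShiftDrift

variable {ν C₀ T : ℝ}

theorem continuous_normalizedShiftDrift : Continuous (normalizedShiftDrift ν C₀ T) := by
  unfold normalizedShiftDrift
  fun_prop

theorem normalizedShiftDrift_self_sq :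
    normalizedShiftDrift ν C₀ T T ^ 2 =
      4 * ν ^ 2 * exp (2 * ν * T) / (C₀ ^ 2 * (exp (2 * ν * T) - 1) ^ 2) := by
  have exp_sq : exp (ν * T) ^ 2 = exp (2 * ν * T) := by
    rw [← exp_nat_mul, Nat.cast_ofNat, mul_assoc]
  rw [normalizedShiftDrift, mul_pow, exp_sq, div_pow, mul_pow, mul_pow, div_mul_eq_mul_div]
  norm_num

theorem one_sub_mul_integral_normalizedShiftDrift (hνT : ν * T ≠ 0) (hC₀ : C₀ ≠ 0) (t : ℝ) :
    1 - C₀ * ∫ s in (0 : ℝ)..t, normalizedShiftDrift ν C₀ T s * exp (ν * s) =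
      (exp (2 * ν * T) - exp (2 * ν * t)) / (exp (2 * ν * T) - 1) := by
  have hν : ν ≠ 0 := left_ne_zero_of_mul hνT
  have exp_sub_one_ne_zero : exp (2 * ν * T) - 1 ≠ 0 := by
    rw [sub_ne_zero, Ne, exp_eq_one_iff, mul_assoc]
    exact mul_ne_zero two_ne_zero hνT
  have integrand_eq (s : ℝ) : normalizedShiftDrift ν C₀ T s * exp (ν * s) =
      2 * ν / (C₀ * (exp (2 * ν * T) - 1)) * exp (2 * ν * s) := by
    rw [normalizedShiftDrift, mul_assoc, ← exp_add, ← two_mul, mul_assoc 2 ν s]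
  simp only [integrand_eq]
  rw [intervalIntegral.integral_const_mul, integral_exp_const_mul (mul_ne_zero two_ne_zero hν)]
  field_simp
  ring

theorem normalizedShiftDrift_moment_integrand_le {p t : ℝ} (hT : 0 < T) (hν : 0 < ν) (hC₀ : C₀ ≠ 0)
    (hp : 2 ≤ p) (htT : t ≤ T) :
    |normalizedShiftDrift ν C₀ T t| ^ p * exp (-ν * t) *
        (1 - C₀ * ∫ s in (0 : ℝ)..t, normalizedShiftDrift ν C₀ T s * exp (ν * s)) ≤
      |normalizedShiftDrift ν C₀ T T| ^ p / (exp (2 * ν * T) - 1) * exp (ν * t) := by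
  have exp_sub_one_pos : 0 < exp (2 * ν * T) - 1 :=
    sub_pos.2 (one_lt_exp_iff.2 (by positivity))
  rw [one_sub_mul_integral_normalizedShiftDrift (mul_pos hν hT).ne' hC₀]
  calc
    _ ≤ |normalizedShiftDrift ν C₀ T T| ^ p * exp (-(2 * ν * T)) * exp (ν * t) *
          (exp (2 * ν * T) / (exp (2 * ν * T) - 1)) := by
      refine mul_le_mul_of_nonneg (abs_mul_exp_rpow_mul_exp_neg_le hν.le hp htT _) ?_
        (by positivity) (by positivity)
      gcongr
      exact sub_le_self _ (exp_nonneg _)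
    _ = _ := by
      rw [exp_neg]
      field_simp

end NormalizedShiftDrift

theorem kth_moment_integral_bound_general {T ν C₀ p : ℝ} (hT : 0 < T) (hν : 0 < ν) (hC₀ : C₀ ≠ 0)
    (hp : 2 ≤ p) :
    ∫ t in (0 : ℝ)..T,
        |normalizedShiftDrift ν C₀ T t| ^ p * exp (-ν * t) *
          (1 - C₀ * ∫ s in (0 : ℝ)..t, normalizedShiftDrift ν C₀ T s * exp (ν * s))
      ≤ |normalizedShiftDrift ν C₀ T T| ^ p * (exp (ν * T) / (ν * (exp (2 * ν * T) - 1))) := by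
  have exp_sub_one_pos : 0 < exp (2 * ν * T) - 1 :=
    sub_pos.2 (one_lt_exp_iff.2 (by positivity))
  have continuous_integrand : Continuous fun t ↦
      |normalizedShiftDrift ν C₀ T t| ^ p * exp (-ν * t) *
        (1 - C₀ * ∫ s in (0 : ℝ)..t, normalizedShiftDrift ν C₀ T s * exp (ν * s)) := by
    have continuous_rpow : Continuous fun t ↦ |normalizedShiftDrift ν C₀ T t| ^ p :=
      continuous_normalizedShiftDrift.abs.rpow_const fun _ ↦ Or.inr (by linarith)
    simp only [one_sub_mul_integral_normalizedShiftDrift (mul_pos hν hT).ne' hC₀]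
    fun_prop
  calc
    _ ≤ ∫ t in (0 : ℝ)..T,
          |normalizedShiftDrift ν C₀ T T| ^ p / (exp (2 * ν * T) - 1) * exp (ν * t) :=
      intervalIntegral.integral_mono_on hT.le (continuous_integrand.intervalIntegrable _ _)
        (Continuous.intervalIntegrable (by fun_prop) _ _)
        fun t ht ↦ normalizedShiftDrift_moment_integrand_le hT hν hC₀ hp ht.2
    _ ≤ |normalizedShiftDrift ν C₀ T T| ^ p / (exp (2 * ν * T) - 1) * (exp (ν * T) / ν) := by
      rw [intervalIntegral.integral_const_mul]
      gcongr
      exact integral_exp_const_mul_le hν T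
    _ = _ := by field_simp

theorem kth_moment_integral_bound (T ν C₀ : ℝ) (hT : 0 < T) (hν : 0 < ν) (hC₀ : 0 < C₀)
    (k : ℕ) (hk : 1 ≤ k)
    (ηb : ℝ → ℝ)
    (hηb : ∀ t, ηb t = 2 * ν / (C₀ * (Real.exp (2 * ν * T) - 1)) * Real.exp (ν * t))
    (α β : ℝ)
    (hα : α = Real.exp (ν * T) / (ν * (Real.exp (2 * ν * T) - 1)))
    (hβ : β = 4 * ν ^ 2 * Real.exp (2 * ν * T) / (C₀ ^ 2 * (Real.exp (2 * ν * T) - 1) ^ 2)) :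
    ∫ t in (0:ℝ)..T,
        ηb t ^ (2 * k) * Real.exp (-ν * t) *
          (1 - C₀ * ∫ s in (0:ℝ)..t, ηb s * Real.exp (ν * s))
      ≤ β ^ k * α := by
  obtain rfl : ηb = normalizedShiftDrift ν C₀ T := funext hηb
  have two_le_exponent : (2 : ℝ) ≤ (2 * k : ℕ) := by exact_mod_cast (by lia : 2 ≤ 2 * k)
  rw [hα, hβ, ← normalizedShiftDrift_self_sq, ← pow_mul]
  simpa only [rpow_natCast, (even_two_mul k).pow_abs] using
    kth_moment_integral_bound_general hT hν hC₀.ne' two_le_exponent
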